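/- Let (Q, m, k) be a commutative Noetherian local ring and let f, g be an exact pair of zerodivisors in m, i.e. f and g are nonzero elements of m with ann_Q(f) = (g) and ann_Q(g) = (f). Set R = Q/(f). If M is a finitely generated R-module with f ∈ m·ann_Q(M), then β_i^R(M) = β_i^Q(M) for every integer i ≥ 0; that is, P_M^R(t) = P_M^Q(t). (This is the main theorem for quasi-complete intersection maps in the case where the kernel is generated by a single exact zerodivisor, in which case grade_Q R = 0.) -/

import Mathlib

open CategoryTheory TensorProduct

/-- The `i`-th Betti number of a module `M` over a local ring `A`:
`β_i^A(M) = dim_k Tor_i^A(M, k)`, computed as the `k`-dimension of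
`k ⊗_A Tor_i^A(M, k)` (the two agree since `Tor_i^A(M, k)` is a `k`-vector
space, being annihilated by the maximal ideal of `A`). -/
noncomputable def bettiNumber (A : Type) [CommRing A] [IsLocalRing A]
    (M : Type) [AddCommGroup M] [Module A M] (i : ℕ) : ℕ :=
  Module.finrank (IsLocalRing.ResidueField A)
    (IsLocalRing.ResidueField A ⊗[A]
      (((Tor (ModuleCat A) i).obj (ModuleCat.of A M)).obj
        (ModuleCat.of A (IsLocalRing.ResidueField A))))


namespace BettiEZ

/-- In a flat module, exactness of a pair of zerodivisors is inherited. -/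
theorem flat_div {Q E : Type*} [CommRing Q] [AddCommGroup E] [Module Q E] [Module.Flat Q E]
    {f g : Q} (h : ∀ x : Q, x * f = 0 → x ∈ Ideal.span {g}) (x : E) (hx : f • x = 0) :
    ∃ y : E, x = g • y := by
  have h1 := Module.Flat.isTrivialRelation_of_sum_smul_eq_zero (R := Q) (M := E) (ι := Fin 1)
    (f := fun _ => f) (x := fun _ => x) (by simpa using hx)
  obtain ⟨κ, a, y, h2, h3⟩ := h1
  have h4 : ∀ j, ∃ c, a 0 j = c * g := fun j => by
    have := h3 j
    simp only [Finset.univ_unique, Finset.sum_singleton] at this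
    obtain ⟨c, hc⟩ := Ideal.mem_span_singleton'.1 (h (a 0 j) (by rw [mul_comm]; exact this))
    exact ⟨c, hc.symm⟩
  choose c hc using h4
  refine ⟨∑ j, c j • y j, ?_⟩
  refine (h2 0).trans ?_
  rw [Finset.smul_sum]
  refine Finset.sum_congr rfl fun j _ => ?_
  rw [hc j, smul_smul, mul_comm]

section Koszul

variable {Q V : Type*} [CommRing Q] [AddCommGroup V] [Module Q V] (d : Module.Dual Q V)

local notation "EE" => CliffordAlgebra (0 : QuadraticForm Q V)
local notation "ii" => CliffordAlgebra.ι (0 : QuadraticForm Q V)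
local notation "dd" => CliffordAlgebra.contractLeft (Q := (0 : QuadraticForm Q V)) d

theorem ii_sq (a : V) : ii a * ii a = 0 := by
  rw [CliffordAlgebra.ι_sq_scalar]; simp

theorem ii_swap (a b : V) : ii a * ii b = - (ii b * ii a) := by
  have h := ii_sq (Q := Q) (a + b)
  simp only [map_add, mul_add, add_mul, ii_sq, zero_add, add_zero] at h
  exact eq_neg_of_add_eq_zero_right h

/-- boundary of a pair -/
def gp (p : V × V) : V := d p.1 • p.2 - d p.2 • p.1

/-- the degree two element of a pair -/
noncomputable def ep (p : V × V) : EE := ii p.1 * ii p.2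

theorem ep_comm (p : V × V) (v : V) : ep p * ii v = ii v * ep (Q := Q) p := by
  unfold ep
  rw [mul_assoc, ii_swap p.2 v, mul_neg, ← mul_assoc, ii_swap p.1 v]
  simp [mul_assoc]

theorem gp_ep (p : V × V) : ii (gp d p) * ep p = 0 := by
  unfold ep gp
  rw [map_sub, map_smul, map_smul, sub_mul, smul_mul_assoc, smul_mul_assoc,
    ← mul_assoc (ii p.1) (ii p.1), ii_sq, ii_swap p.1 p.2, mul_neg, ← mul_assoc, ii_sq]
  simp

theorem dd_ep_mul (p : V × V) (x : EE) : dd (ep p * x) = ii (gp d p) * x + ep p * dd x := by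
  unfold ep gp
  rw [mul_assoc, CliffordAlgebra.contractLeft_ι_mul, CliffordAlgebra.contractLeft_ι_mul]
  simp only [mul_sub, map_sub, map_smul, sub_mul, smul_mul_assoc, mul_smul_comm, mul_assoc]
  abel

/-- divided powers -/
noncomputable def ss : List (V × V) → ℕ → EE
  | _, 0 => 1
  | [], _ + 1 => 0
  | p :: L, n + 1 => ss L (n + 1) + ep p * ss L n

/-- total boundary -/
def gl : List (V × V) → V
  | [] => 0
  | p :: L => gp d p + gl L

theorem ss_zero (L : List (V × V)) : ss L 0 = (1 : EE) := by
  cases L <;> rfl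

theorem ss_big (L : List (V × V)) (n : ℕ) (h : L.length < n) : ss L n = (0 : EE) := by
  induction L generalizing n with
  | nil => cases n with
    | zero => simp at h
    | succ n => rfl
  | cons p L ih =>
    cases n with
    | zero => simp at h
    | succ n =>
      simp only [List.length_cons] at h
      simp [ss, ih (n+1) (by omega), ih n (by omega)]

theorem dd_ss (L : List (V × V)) (n : ℕ) : dd (ss L (n + 1)) = ii (gl d L) * ss L n := by
  induction L generalizing n with
  | nil => simp [ss, gl]
  | cons p L ih =>
    cases n with
    | zero =>
      have h := dd_ep_mul d p 1
      simp only [mul_one, CliffordAlgebra.contractLeft_one, mul_zero, add_zero] at h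
      simp [ss, gl, ih, ss_zero, h, add_comm]
    | succ n =>
      simp only [ss, gl, map_add, dd_ep_mul, ih, add_mul, mul_add]
      rw [← mul_assoc (ii (gp d p)) (ep p), gp_ep, ← mul_assoc (ep p), ep_comm, mul_assoc]
      simp only [zero_mul, zero_add]
      abel

theorem exists_list {x : V}
    (hx : x ∈ Submodule.span Q (Set.range (gp d))) : ∃ L, gl d L = x := by
  induction hx using Submodule.span_induction with
  | mem x h => obtain ⟨p, rfl⟩ := h; exact ⟨[p], by simp [gl]⟩
  | zero => exact ⟨[], rfl⟩
  | add x y _ _ hx hy =>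
    obtain ⟨L, rfl⟩ := hx
    obtain ⟨L', rfl⟩ := hy
    refine ⟨L ++ L', ?_⟩
    clear * -
    induction L with
    | nil => simp [gl]
    | cons p L ih => simp [gl, ih, add_assoc]
  | smul a x _ hx =>
    obtain ⟨L, rfl⟩ := hx
    refine ⟨L.map (fun p => (a • p.1, p.2)), ?_⟩
    clear * -
    induction L with
    | nil => simp [gl]
    | cons p L ih => 
      simp [gl, ih, gp, smul_sub, smul_smul]; simp [mul_comm]

theorem counit_dd (I : Ideal Q) (hI : ∀ v, d v ∈ I) (x : EE) :
    ExteriorAlgebra.algebraMapInv (dd x) ∈ I := by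
  induction x using CliffordAlgebra.left_induction with
  | algebraMap => simp
  | add _ _ hx hy => rw [map_add, map_add]; exact I.add_mem hx hy
  | ι_mul x v hx =>
    rw [CliffordAlgebra.contractLeft_ι_mul, map_sub, map_mul, map_smul]
    have : ExteriorAlgebra.algebraMapInv (ii v) = 0 := by
      simp [ExteriorAlgebra.algebraMapInv]
    rw [this, zero_mul, sub_zero]
    exact I.mul_mem_right _ (hI v)

theorem koszul_not_mem [Module.Free Q V] {f g : Q}
    (hannf : ∀ x : Q, x * f = 0 → x ∈ Ideal.span {g})
    (hanng : ∀ x : Q, x * g = 0 → x ∈ Ideal.span {f})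
    (I : Ideal Q) (hI1 : (1 : Q) ∉ I) (hg : g ∈ I) (hI : ∀ v, d v ∈ I)
    (F : V) (hF : d F = f) : g • F ∉ Submodule.span Q (Set.range (gp d)) := by
  intro hmem
  obtain ⟨L, hL⟩ := exists_list d hmem
  have hfree : Module.Free Q EE := by
    classical
    let _ : LinearOrder (Module.Free.ChooseBasisIndex Q V) := linearOrderOfSTO WellOrderingRel
    exact Module.Free.of_basis (Module.Free.chooseBasis Q V).ExteriorAlgebra
  have key : ∀ k, ∃ u v : EE, ss L (L.length + 1 - k) = dd u + g • v := by
    intro k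
    induction k with
    | zero => exact ⟨0, 0, by rw [ss_big _ _ (by omega)]; simp⟩
    | succ k ih =>
      by_cases hk : L.length + 1 ≤ k
      · have : L.length + 1 - (k + 1) = L.length + 1 - k := by omega
        rw [this]; exact ih
      obtain ⟨n, hn⟩ : ∃ n, L.length + 1 - k = n + 1 := ⟨L.length - k, by omega⟩
      have hn' : L.length + 1 - (k+1) = n := by omega
      rw [hn] at ih
      rw [hn']
      obtain ⟨u, v, h⟩ := ih
      have h1 := congrArg dd h
      rw [dd_ss, hL, map_add, CliffordAlgebra.contractLeft_contractLeft, zero_add, map_smul,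
        map_smul, smul_mul_assoc, ← sub_eq_zero, ← smul_sub] at h1
      obtain ⟨u', h2⟩ := flat_div hanng _ h1
      have h3 := congrArg dd h2
      rw [map_sub, CliffordAlgebra.contractLeft_contractLeft, sub_zero,
        CliffordAlgebra.contractLeft_ι_mul, hF, map_smul] at h3
      have h4 : ii F * dd (ss L n) = 0 := by
        cases n with
        | zero => rw [ss_zero]; simp
        | succ n => rw [dd_ss, hL, map_smul, ← mul_assoc, mul_smul_comm, ii_sq]; simp
      rw [h4, sub_zero, ← sub_eq_zero, ← smul_sub] at h3
      obtain ⟨v', h5⟩ := flat_div hannf _ h3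
      exact ⟨u', v', by rw [← h5]; abel⟩
  obtain ⟨u, v, h⟩ := key (L.length + 1)
  rw [Nat.sub_self, ss_zero] at h
  have h1 := congrArg ExteriorAlgebra.algebraMapInv h
  apply hI1
  rw [map_one, map_add, map_smul] at h1
  rw [h1]
  exact I.add_mem (counit_dd d I hI u) (I.mul_mem_right _ hg)

end Koszul
end BettiEZ



namespace BettiEZ

open IsLocalRing

/-- The data of the module `P`. -/
theorem exists_P (Q : Type) [CommRing Q] [IsLocalRing Q] (f g : Q)
    (hgm : g ∈ maximalIdeal Q)
    (hannf : ∀ x : Q, x * f = 0 ↔ x ∈ Ideal.span {g})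
    (hanng : ∀ x : Q, x * g = 0 ↔ x ∈ Ideal.span {f})
    {r : ℕ} (a b : Fin r → Q) (ha : ∀ j, a j ∈ maximalIdeal Q) (hab : ∑ j, a j * b j = f) :
    ∃ (P : Type) (_ : AddCommGroup P) (_ : Module Q P) (d : P →ₗ[Q] Q) (x : Fin r → P),
      (∀ p p', d p • p' = d p' • p) ∧ LinearMap.range d = maximalIdeal Q ∧
      (∀ j, d (x j) = a j) ∧
      (∀ z, d z = 0 → ∃ q : Q, z = q • g • ∑ j, b j • x j) ∧
      (∀ q : Q, q • g • ∑ j, b j • x j = 0 → q ∈ maximalIdeal Q) := by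
  classical
  let d : (↥(maximalIdeal Q) →₀ Q) →ₗ[Q] Q := Finsupp.linearCombination Q (fun m : maximalIdeal Q => (m : Q))
  have hd : ∀ m : maximalIdeal Q, d (Finsupp.single m 1) = m := fun m => by
    simp [d]
  have hdm : ∀ v, d v ∈ maximalIdeal Q := fun v => by
    simp only [d, Finsupp.linearCombination_apply]
    exact Submodule.sum_mem _ fun i _ => (maximalIdeal Q).mul_mem_left _ i.2
  let v : Fin r → (↥(maximalIdeal Q) →₀ Q) := fun j => Finsupp.single ⟨a j, ha j⟩ 1
  have hv : ∀ j, d (v j) = a j := fun j => hd _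
  let F : (↥(maximalIdeal Q) →₀ Q) := ∑ j, b j • v j
  have hF : d F = f := by
    simp only [F, map_sum, map_smul, hv, smul_eq_mul, ← hab]
    exact Finset.sum_congr rfl fun j _ => mul_comm _ _
  let B := Submodule.span Q (Set.range (gp d))
  have hB : g • F ∉ B := koszul_not_mem d (fun x => (hannf x).1) (fun x => (hanng x).1)
    (maximalIdeal Q) (fun h => (Ideal.ne_top_iff_one _).1 (maximalIdeal.isMaximal Q).ne_top h)
    hgm hdm F hF
  have hBk : B ≤ LinearMap.ker d := by
    refine Submodule.span_le.2 ?_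
    rintro _ ⟨p, rfl⟩
    simp [gp, mul_comm]
  have hgf : g * f = 0 := (hannf g).2 (Ideal.mem_span_singleton_self g)
  have hz : ∃ L, Maximal (fun L : Submodule Q (↥(maximalIdeal Q) →₀ Q) => B ≤ L ∧ L ≤ LinearMap.ker d ∧ g • F ∉ L) L := by
    obtain ⟨L, -, hL⟩ := zorn_le_nonempty₀
      {L : Submodule Q (↥(maximalIdeal Q) →₀ Q) | B ≤ L ∧ L ≤ LinearMap.ker d ∧ g • F ∉ L} (by
        intro c hc hchain y hy
        refine ⟨sSup c, ⟨(hc hy).1.trans (le_sSup hy), sSup_le fun z hz => (hc hz).2.1, ?_⟩,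
          fun z hz => le_sSup hz⟩
        intro hmem
        rw [Submodule.mem_sSup_of_directed ⟨y, hy⟩ hchain.directedOn] at hmem
        obtain ⟨z, hz, hz'⟩ := hmem
        exact (hc hz).2.2 hz') B ⟨le_rfl, hBk, hB⟩
    exact ⟨L, hL⟩
  obtain ⟨L, ⟨hL1, hL2, hL3⟩, hLmax⟩ := hz
  have hcomm : ∀ p p' : (↥(maximalIdeal Q) →₀ Q), d p • p' - d p' • p ∈ L := fun p p' =>
    hL1 (Submodule.subset_span ⟨(p, p'), rfl⟩)
  have hsum : g • ∑ j, b j • L.mkQ (v j) = L.mkQ (g • F) := by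
    simp [F]
  refine ⟨(↥(maximalIdeal Q) →₀ Q) ⧸ L, inferInstance, inferInstance, L.liftQ d hL2, fun j => L.mkQ (v j), ?_, ?_, ?_,
    ?_, ?_⟩
  · intro p p'
    obtain ⟨p, rfl⟩ := L.mkQ_surjective p
    obtain ⟨p', rfl⟩ := L.mkQ_surjective p'
    simp only [Submodule.mkQ_apply, Submodule.liftQ_apply]
    rw [← Submodule.Quotient.mk_smul, ← Submodule.Quotient.mk_smul, Submodule.Quotient.eq]
    exact hcomm p p'
  · rw [Submodule.range_liftQ]
    apply le_antisymm
    · rintro _ ⟨v, rfl⟩; exact hdm v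
    · intro m hm
      exact ⟨_, hd ⟨m, hm⟩⟩
  · intro j; simp [hv]
  · intro z hz
    rw [hsum]
    obtain ⟨z, rfl⟩ := L.mkQ_surjective z
    simp only [Submodule.mkQ_apply, Submodule.liftQ_apply] at hz
    by_cases hzL : z ∈ L
    · exact ⟨0, by simp [(Submodule.Quotient.mk_eq_zero L).2 hzL]⟩
    have hmz : ∀ m ∈ maximalIdeal Q, m • z ∈ L := fun m hm => by
      have := hcomm (Finsupp.single ⟨m, hm⟩ 1) z
      rw [hd, hz, zero_smul, sub_zero] at this
      exact this
    have h1 : g • F ∈ L ⊔ Submodule.span Q {z} := by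
      by_contra hn
      have := hLmax (y := L ⊔ Submodule.span Q {z}) ⟨hL1.trans le_sup_left, sup_le hL2 (by
        rw [Submodule.span_singleton_le_iff_mem]; exact hz), hn⟩ le_sup_left
      exact hzL (this (Submodule.mem_sup_right (Submodule.mem_span_singleton_self z)))
    obtain ⟨l, hl, w, hw, hlw⟩ := Submodule.mem_sup.1 h1
    obtain ⟨q, rfl⟩ := Submodule.mem_span_singleton.1 hw
    have hq : IsUnit q := by
      by_contra hq
      apply hL3
      rw [← hlw]
      exact L.add_mem hl (hmz q ((mem_maximalIdeal q).2 hq))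
    obtain ⟨u, rfl⟩ := hq
    refine ⟨(↑u⁻¹ : Q), ?_⟩
    rw [← hlw, map_add, show L.mkQ l = 0 from (Submodule.Quotient.mk_eq_zero L).2 hl, zero_add,
      map_smul, smul_smul]
    simp
  · intro q hq
    by_contra hqm
    have hu : IsUnit q := by
      by_contra h; exact hqm ((mem_maximalIdeal q).2 h)
    obtain ⟨u, rfl⟩ := hu
    rw [hsum] at hq
    apply hL3
    have := congrArg (fun t => (↑u⁻¹ : Q) • t) hq
    simp only [smul_smul, Units.inv_mul, one_smul, smul_zero] at this
    exact (Submodule.Quotient.mk_eq_zero L).1 this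

end BettiEZ



namespace BettiEZ

theorem exists_res (Q P : Type) [CommRing Q] [AddCommGroup P] [Module Q P] :
    ∃ (Y : ℕ → Type) (_ : ∀ n, AddCommGroup (Y n)) (_ : ∀ n, Module Q (Y n))
      (dY : ∀ n, Y (n + 1) →ₗ[Q] Y n) (ε : Y 0 →ₗ[Q] P),
      (∀ n, Module.Projective Q (Y n)) ∧ Function.Surjective ε ∧ Function.Exact (dY 0) ε ∧
      ∀ n, Function.Exact (dY (n + 1)) (dY n) := by
  let R := projectiveResolution (ModuleCat.of Q P)
  refine ⟨fun n => R.complex.X n, inferInstance, inferInstance, fun n => (R.complex.d (n+1) n).hom,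
    (R.π.f 0).hom, fun n => (IsProjective.iff_projective _).2 (R.projective n), ?_, ?_, ?_⟩
  · exact (ModuleCat.epi_iff_surjective _).1 inferInstance
  · have := (ShortComplex.ShortExact.moduleCat_exact_iff_function_exact _).1 R.exact₀
    exact this
  · intro n
    exact (ShortComplex.ShortExact.moduleCat_exact_iff_function_exact _).1 (R.exact_succ n)

section Base

variable {Q : Type} [CommRing Q] {X Y Z : Type} [AddCommGroup X] [Module Q X]
  [AddCommGroup Y] [Module Q Y] [AddCommGroup Z] [Module Q Z] {r : ℕ}

/-- polynomial ring -/
abbrev BB (Q : Type) [CommRing Q] (r : ℕ) : Type := MvPolynomial (Fin r) Q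

/-- Extend a polynomial valued map. -/
noncomputable abbrev hat (h : X →ₗ[Q] (BB Q r) ⊗[Q] Y) : (BB Q r) ⊗[Q] X →ₗ[BB Q r] (BB Q r) ⊗[Q] Y :=
  h.liftBaseChange (BB Q r)

theorem hat_tmul (h : X →ₗ[Q] (BB Q r) ⊗[Q] Y) (p : BB Q r) (x : X) :
    hat h (p ⊗ₜ x) = p • h x := by
  simp [hat]

/-- Extensionality. -/
theorem bb_ext {N : Type} [AddCommGroup N] [Module (BB Q r) N]
    (h h' : (BB Q r) ⊗[Q] X →ₗ[BB Q r] N)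
    (H : ∀ x, h (1 ⊗ₜ x) = h' (1 ⊗ₜ x)) (t : (BB Q r) ⊗[Q] X) : h t = h' t := by
  induction t with
  | zero => simp
  | add x y hx hy => rw [map_add, map_add, hx, hy]
  | tmul p x =>
    have : p ⊗ₜ[Q] x = p • ((1 : BB Q r) ⊗ₜ[Q] x) := by
      rw [TensorProduct.smul_tmul', smul_eq_mul, mul_one]
    rw [this, map_smul, map_smul, H]

/-- Evaluation of polynomial coefficients. -/
noncomputable def ev (c : Fin r → Q) (X : Type) [AddCommGroup X] [Module Q X] :
    (BB Q r) ⊗[Q] X →ₗ[Q] X :=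
  (TensorProduct.lid Q X).toLinearMap ∘ₗ (MvPolynomial.aeval c).toLinearMap.rTensor X

theorem ev_tmul (c : Fin r → Q) (p : BB Q r) (x : X) :
    ev c X (p ⊗ₜ x) = MvPolynomial.aeval c p • x := by
  simp [ev]

theorem ev_smul (c : Fin r → Q) (p : BB Q r) (t : (BB Q r) ⊗[Q] X) :
    ev c X (p • t) = MvPolynomial.aeval c p • ev c X t := by
  induction t with
  | zero => simp
  | add x y hx hy => rw [smul_add, map_add, map_add, hx, hy, smul_add]
  | tmul q x => rw [TensorProduct.smul_tmul', ev_tmul, ev_tmul, smul_eq_mul, map_mul, mul_smul]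

theorem ev_hat (c : Fin r → Q) (h : X →ₗ[Q] (BB Q r) ⊗[Q] Y) (t : (BB Q r) ⊗[Q] X) :
    ev c Y (hat h t) = ev c Y (h (ev c X t)) := by
  induction t with
  | zero => simp
  | add x y hx hy => rw [map_add, map_add, hx, hy, map_add, map_add, map_add]
  | tmul q x => rw [hat_tmul, ev_tmul, ev_smul, map_smul, map_smul]

theorem ev_baseChange (c : Fin r → Q) (h : X →ₗ[Q] Y) (t : (BB Q r) ⊗[Q] X) :
    ev c Y (h.baseChange (BB Q r) t) = h (ev c X t) := by
  induction t with
  | zero => simp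
  | add x y hx hy => rw [map_add, map_add, hx, hy, map_add, map_add]
  | tmul q x => rw [LinearMap.baseChange_tmul, ev_tmul, ev_tmul, map_smul]

theorem aeval_sub_mem (J : Ideal Q) (c c' : Fin r → Q) (h : ∀ j, c j - c' j ∈ J) (p : BB Q r) :
    MvPolynomial.aeval c p - MvPolynomial.aeval c' p ∈ J := by
  induction p using MvPolynomial.induction_on with
  | C q => simp
  | add p q hp hq => simp only [map_add]; convert J.add_mem hp hq using 1; ring
  | mul_X p j hp =>
    simp only [map_mul, MvPolynomial.aeval_X]
    convert J.add_mem (J.mul_mem_right (c j) hp)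
      (J.mul_mem_left (MvPolynomial.aeval c' p) (h j)) using 1
    ring

theorem ev_sub_mem (J : Ideal Q) (c c' : Fin r → Q) (h : ∀ j, c j - c' j ∈ J)
    (t : (BB Q r) ⊗[Q] X) : ev c X t - ev c' X t ∈ J • (⊤ : Submodule Q X) := by
  induction t with
  | zero => simp
  | add x y hx hy =>
    simp only [map_add]; convert Submodule.add_mem _ hx hy using 1; abel
  | tmul q x =>
    rw [ev_tmul, ev_tmul, ← sub_smul]
    exact Submodule.smul_mem_smul (aeval_sub_mem J c c' h q) trivial

end Base

section Stages

variable {Q : Type} [CommRing Q] {r : ℕ} (a : Fin r → Q)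
  (Y : ℕ → Type) [∀ n, AddCommGroup (Y n)] [∀ n, Module Q (Y n)]
  (dY : ∀ n, Y (n + 1) →ₗ[Q] Y n)

/-- The generic linear form. -/
noncomputable def phi : BB Q r := ∑ j, MvPolynomial.C (a j) * MvPolynomial.X j

theorem aeval_phi (c : Fin r → Q) : MvPolynomial.aeval c (phi a) = ∑ j, a j * c j := by
  simp [phi]

/-- A stage of the construction. -/
structure Stage (i : ℕ) where
  X : Type
  Z : Type
  [agX : AddCommGroup X]
  [agZ : AddCommGroup Z]
  [mX : Module Q X]
  [mZ : Module Q Z]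
  projX : Module.Projective Q X
  projZ : Module.Projective Q Z
  inc : Y i →ₗ[Q] Z
  pr : Z →ₗ[Q] Y i
  pr_inc : ∀ y, pr (inc y) = y
  δ : Z →ₗ[Q] (BB Q r) ⊗[Q] X
  η : X →ₗ[Q] (BB Q r) ⊗[Q] Z
  h1 : ∀ w, δ (inc (dY i w)) = 0
  h2 : ∀ x, hat δ (η x) = phi a • (1 ⊗ₜ x)
  h3 : ∀ y, hat η (δ y) + inc.baseChange (BB Q r) (phi a • (1 ⊗ₜ pr y) -
    pr.baseChange (BB Q r) (hat η (δ y))) = phi a • (1 ⊗ₜ y)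
  h4 : ∀ y, ∃ t, (dY i).baseChange (BB Q r) t =
    phi a • (1 ⊗ₜ pr y) - pr.baseChange (BB Q r) (hat η (δ y))

attribute [instance] Stage.agX Stage.agZ Stage.mX Stage.mZ

variable {a Y dY} {i : ℕ} (s : Stage a Y dY i)

/-- The map whose image is covered. -/
noncomputable def Stage.mu : s.Z →ₗ[Q] (BB Q r) ⊗[Q] Y i :=
  ((phi a • (LinearMap.id : (BB Q r) ⊗[Q] Y i →ₗ[BB Q r] _)).restrictScalars Q ∘ₗ
    TensorProduct.mk Q (BB Q r) (Y i) 1 ∘ₗ s.pr) -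
  ((s.pr.baseChange (BB Q r)).restrictScalars Q ∘ₗ (hat s.η).restrictScalars Q ∘ₗ s.δ)

theorem Stage.mu_apply (y : s.Z) : s.mu y =
    phi a • (1 ⊗ₜ s.pr y) - s.pr.baseChange (BB Q r) (hat s.η (s.δ y)) := by
  simp [Stage.mu]

theorem Stage.exists_lam : ∃ lam : s.Z →ₗ[Q] (BB Q r) ⊗[Q] Y (i + 1),
    ∀ y, (dY i).baseChange (BB Q r) (lam y) = s.mu y := by
  have := s.projZ
  let D := ((dY i).baseChange (BB Q r)).restrictScalars Q
  have hmem : ∀ y, s.mu y ∈ LinearMap.range D := fun y => by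
    obtain ⟨t, ht⟩ := s.h4 y
    exact ⟨t, by rw [s.mu_apply]; exact ht⟩
  obtain ⟨lam, hl⟩ := Module.projective_lifting_property D.rangeRestrict
    (s.mu.codRestrict _ hmem) D.surjective_rangeRestrict
  refine ⟨lam, fun y => ?_⟩
  have := congrArg Subtype.val (LinearMap.congr_fun hl y)
  exact this

/-- The chosen lift. -/
noncomputable def Stage.lam : s.Z →ₗ[Q] (BB Q r) ⊗[Q] Y (i + 1) := s.exists_lam.choose

theorem Stage.lam_spec (y : s.Z) : (dY i).baseChange (BB Q r) (s.lam y) =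
    phi a • (1 ⊗ₜ s.pr y) - s.pr.baseChange (BB Q r) (hat s.η (s.δ y)) := by
  rw [← s.mu_apply]; exact s.exists_lam.choose_spec y

theorem Stage.hat_delta_eta (t : (BB Q r) ⊗[Q] s.X) : hat s.δ (hat s.η t) = phi a • t :=
  bb_ext (hat s.δ ∘ₗ hat s.η) (phi a • LinearMap.id) (fun x => by
    simp [s.h2]) t

theorem Stage.lam_hat (t : (BB Q r) ⊗[Q] s.Z) :
    (dY i).baseChange (BB Q r) (hat s.lam t) =
      phi a • s.pr.baseChange (BB Q r) t - s.pr.baseChange (BB Q r) (hat s.η (hat s.δ t)) :=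
  bb_ext ((dY i).baseChange (BB Q r) ∘ₗ hat s.lam)
    (phi a • s.pr.baseChange (BB Q r) - s.pr.baseChange (BB Q r) ∘ₗ hat s.η ∘ₗ hat s.δ) (fun x => by
    simp [s.lam_spec]) t

/-- new δ -/
noncomputable def Stage.δ' : Y (i + 1) × s.X →ₗ[Q] (BB Q r) ⊗[Q] s.Z :=
  (TensorProduct.mk Q (BB Q r) s.Z 1 ∘ₗ s.inc ∘ₗ dY i).coprod s.η

/-- new η -/
noncomputable def Stage.η' : s.Z →ₗ[Q] (BB Q r) ⊗[Q] (Y (i + 1) × s.X) :=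
  ((LinearMap.inl Q (Y (i + 1)) s.X).baseChange (BB Q r)).restrictScalars Q ∘ₗ s.lam +
  ((LinearMap.inr Q (Y (i + 1)) s.X).baseChange (BB Q r)).restrictScalars Q ∘ₗ s.δ

theorem Stage.δ'_apply (w : Y (i + 1)) (x : s.X) :
    s.δ' (w, x) = 1 ⊗ₜ s.inc (dY i w) + s.η x := by
  simp [Stage.δ']

theorem Stage.η'_apply (y : s.Z) : s.η' y =
    (LinearMap.inl Q (Y (i + 1)) s.X).baseChange (BB Q r) (s.lam y) +
    (LinearMap.inr Q (Y (i + 1)) s.X).baseChange (BB Q r) (s.δ y) := rfl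

theorem Stage.hat_δ'_inl (t : (BB Q r) ⊗[Q] Y (i + 1)) :
    hat s.δ' ((LinearMap.inl Q (Y (i + 1)) s.X).baseChange (BB Q r) t) =
      s.inc.baseChange (BB Q r) ((dY i).baseChange (BB Q r) t) :=
  bb_ext (hat s.δ' ∘ₗ (LinearMap.inl Q (Y (i + 1)) s.X).baseChange (BB Q r))
    (s.inc.baseChange (BB Q r) ∘ₗ (dY i).baseChange (BB Q r)) (fun x => by
      simp [Stage.δ'_apply]) t

theorem Stage.hat_δ'_inr (t : (BB Q r) ⊗[Q] s.X) :
    hat s.δ' ((LinearMap.inr Q (Y (i + 1)) s.X).baseChange (BB Q r) t) = hat s.η t :=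
  bb_ext (hat s.δ' ∘ₗ (LinearMap.inr Q (Y (i + 1)) s.X).baseChange (BB Q r))
    (hat s.η) (fun x => by simp [Stage.δ'_apply]) t

theorem Stage.hat_η' (t : (BB Q r) ⊗[Q] s.Z) : hat s.η' t =
    (LinearMap.inl Q (Y (i + 1)) s.X).baseChange (BB Q r) (hat s.lam t) +
    (LinearMap.inr Q (Y (i + 1)) s.X).baseChange (BB Q r) (hat s.δ t) :=
  bb_ext (hat s.η') ((LinearMap.inl Q (Y (i + 1)) s.X).baseChange (BB Q r) ∘ₗ hat s.lam +
    (LinearMap.inr Q (Y (i + 1)) s.X).baseChange (BB Q r) ∘ₗ hat s.δ)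
    (fun x => by simp [Stage.η'_apply]) t

theorem fst_inl_bc {X X' : Type} [AddCommGroup X] [Module Q X] [AddCommGroup X'] [Module Q X']
    (t : (BB Q r) ⊗[Q] X) : (LinearMap.fst Q X X').baseChange (BB Q r)
      ((LinearMap.inl Q X X').baseChange (BB Q r) t) = t :=
  bb_ext ((LinearMap.fst Q X X').baseChange (BB Q r) ∘ₗ
      (LinearMap.inl Q X X').baseChange (BB Q r)) LinearMap.id (fun x => by simp) t

theorem fst_inr_bc {X X' : Type} [AddCommGroup X] [Module Q X] [AddCommGroup X'] [Module Q X']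
    (t : (BB Q r) ⊗[Q] X') : (LinearMap.fst Q X X').baseChange (BB Q r)
      ((LinearMap.inr Q X X').baseChange (BB Q r) t) = 0 :=
  bb_ext ((LinearMap.fst Q X X').baseChange (BB Q r) ∘ₗ
      (LinearMap.inr Q X X').baseChange (BB Q r)) 0 (fun x => by simp) t

theorem Stage.hat_δ_δ' (w : Y (i + 1)) (x : s.X) :
    hat s.δ (s.δ' (w, x)) = phi a • (1 ⊗ₜ x) := by
  rw [s.δ'_apply, map_add, hat_tmul, s.h1, smul_zero, zero_add, s.h2]

/-- Next stage. -/
noncomputable def Stage.next (hproj : Module.Projective Q (Y (i + 1)))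
    (hex : Function.Exact (dY (i + 1)) (dY i)) : Stage a Y dY (i + 1) where
  X := s.Z
  Z := Y (i + 1) × s.X
  projX := s.projZ
  projZ := by
    have := s.projX
    infer_instance
  inc := LinearMap.inl Q _ _
  pr := LinearMap.fst Q _ _
  pr_inc := fun y => rfl
  δ := s.δ'
  η := s.η'
  h1 := fun w => by
    rw [LinearMap.inl_apply, s.δ'_apply, hex.apply_apply_eq_zero]
    simp
  h2 := fun y => by
    rw [s.η'_apply, map_add, s.hat_δ'_inl, s.hat_δ'_inr, s.lam_spec, add_comm, s.h3]
  h3 := fun ⟨w, x⟩ => by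
    rw [s.hat_η', map_add, fst_inl_bc, fst_inr_bc, add_zero, s.hat_δ_δ', map_sub, LinearMap.fst_apply]
    simp only [map_smul, LinearMap.baseChange_tmul, LinearMap.inl_apply, LinearMap.inr_apply]
    have : ((w, x) : Y (i + 1) × s.X) = (w, 0) + (0, x) := by simp
    rw [this, TensorProduct.tmul_add, smul_add]
    abel
  h4 := fun ⟨w, x⟩ => by
    rw [s.hat_η', map_add, fst_inl_bc, fst_inr_bc, add_zero]
    have hex' : Function.Exact ((dY (i + 1)).baseChange (BB Q r)) ((dY i).baseChange (BB Q r)) :=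
      Module.Flat.lTensor_exact (BB Q r) hex
    refine (hex' _).1 ?_
    rw [map_sub, s.lam_hat, s.hat_δ_δ', s.δ'_apply]
    simp [s.pr_inc]

/-- Specialized differential. -/
noncomputable def Stage.dc (c : Fin r → Q) : s.Z →ₗ[Q] s.X := ev c s.X ∘ₗ s.δ

/-- Specialized homotopy. -/
noncomputable def Stage.hc (c : Fin r → Q) : s.X →ₗ[Q] s.Z := ev c s.Z ∘ₗ s.η

theorem Stage.dc_hc (c : Fin r → Q) (x : s.X) : s.dc c (s.hc c x) = (∑ j, a j * c j) • x := by
  simp only [Stage.dc, Stage.hc, LinearMap.comp_apply]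
  rw [← ev_hat, s.h2, ev_smul, ev_tmul, aeval_phi]; simp

theorem Stage.next_dc (hproj hex) (c : Fin r → Q) (w : Y (i + 1)) (x : s.X) :
    (s.next hproj hex).dc c (w, x) = s.inc (dY i w) + s.hc c x := by
  simp only [Stage.dc, Stage.hc, LinearMap.comp_apply]
  change ev c s.Z (s.δ' (w, x)) = _
  rw [s.δ'_apply, map_add, ev_tmul]
  simp

theorem Stage.next_hc (hproj hex) (c : Fin r → Q) (y : s.Z) :
    (s.next hproj hex).hc c y = (ev c _ (s.lam y), s.dc c y) := by
  simp only [Stage.dc, Stage.hc, LinearMap.comp_apply]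
  change ev c (Y (i + 1) × s.X) (s.η' y) = _
  rw [s.η'_apply, map_add, ev_baseChange, ev_baseChange]
  simp

end Stages

end BettiEZ



namespace BettiEZ

open IsLocalRing

section YD

variable {Q : Type} [CommRing Q]
  {Y : ℕ → Type} [∀ n, AddCommGroup (Y n)] [∀ n, Module Q (Y n)]
  (dY : ∀ n, Y (n + 1) →ₗ[Q] Y n)

/-- Exactness modulo an element. -/
def YD (e : Q) (n : ℕ) : Prop := ∀ (w : Y (n + 1)) (v : Y n), dY n w = e • v →
  ∃ (w' : Y (n + 2)) (v' : Y (n + 1)), w = dY (n + 1) w' + e • v'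

theorem YD_zero_elt (hex : ∀ n, Function.Exact (dY (n + 1)) (dY n)) (n : ℕ) : YD dY 0 n := by
  intro w v h
  rw [zero_smul] at h
  obtain ⟨w', rfl⟩ := (hex n w).1 h
  exact ⟨w', 0, by simp⟩

theorem YD_succ (hproj : ∀ n, Module.Projective Q (Y n))
    (hex : ∀ n, Function.Exact (dY (n + 1)) (dY n)) {f g : Q} (hfg : f * g = 0)
    (hannf : ∀ x : Q, x * f = 0 → x ∈ Ideal.span {g}) (n : ℕ) (h : YD dY g n) :
    YD dY f (n + 1) := by
  intro w v hw
  have h1 : f • dY n v = 0 := by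
    rw [← map_smul, ← hw, (hex n).apply_apply_eq_zero]
  obtain ⟨v', hv'⟩ := flat_div hannf _ h1
  obtain ⟨w', v'', hv⟩ := h v v' hv'
  have h2 : dY (n + 1) (w - f • w') = 0 := by
    rw [map_sub, map_smul, hw, hv, smul_add, smul_smul f g, hfg]; simp
  obtain ⟨w2, h3⟩ := (hex (n + 1) _).1 h2
  exact ⟨w2, w', by rw [h3]; abel⟩

theorem YD_base {P : Type} [AddCommGroup P] [Module Q P] (ε : Y 0 →ₗ[Q] P)
    (hε : Function.Surjective ε) (hε0 : Function.Exact (dY 0) ε)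
    (hex : ∀ n, Function.Exact (dY (n + 1)) (dY n)) {f g : Q} (hfg : f * g = 0)
    (K : ∀ p : P, f • p = 0 → ∃ t, p = g • t) : YD dY f 0 := by
  intro w v hw
  have h1 : f • ε v = 0 := by
    rw [← map_smul, ← hw, hε0.apply_apply_eq_zero]
  obtain ⟨t, ht⟩ := K _ h1
  obtain ⟨t, rfl⟩ := hε t
  have h2 : ε (v - g • t) = 0 := by rw [map_sub, map_smul, ht, sub_self]
  obtain ⟨w1, hw1⟩ := (hε0 _).1 h2
  have h3 : dY 0 (w - f • w1) = 0 := by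
    rw [map_sub, map_smul, hw, hw1, smul_sub, smul_smul, hfg]; simp
  obtain ⟨w2, h4⟩ := (hex 0 _).1 h3
  exact ⟨w2, w1, by rw [h4]; abel⟩

variable {dY} {r : ℕ} {a : Fin r → Q} {i : ℕ}

/-- exactness of a specialized stage -/
def Stage.Ex (s : Stage a Y dY i) (c : Fin r → Q) (e : Q) : Prop :=
  ∀ (y : s.Z) (x : s.X), s.dc c y = e • x →
    ∃ (w : Y (i + 1)) (x' : s.X) (v : s.Z), y = s.inc (dY i w) + s.hc c x' + e • v

theorem ex_aux {A3 A2 A1 Z X : Type} [AddCommGroup A3] [Module Q A3] [AddCommGroup A2] [Module Q A2]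
    [AddCommGroup A1] [Module Q A1] [AddCommGroup Z] [Module Q Z] [AddCommGroup X] [Module Q X]
    (e : Q) (d3 : A3 →ₗ[Q] A2) (d2 : A2 →ₗ[Q] A1)
    (hY : ∀ w v, d2 w = e • v → ∃ w' v', w = d3 w' + e • v')
    (D2 : A2 × Z →ₗ[Q] A1 × X) (H2 : A1 × X →ₗ[Q] A2 × Z) (D1 : A1 × X →ₗ[Q] Z) (D : Z →ₗ[Q] X)
    (lam : Z → A1)
    (hD2 : ∀ w x, D2 (w, x) = (d2 w + lam x, D x))
    (hH2 : ∀ z, (H2 z).2 = D1 z) (hDH : ∀ z, D2 (H2 z) = e • z)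
    (hlam : ∀ z, lam (e • z) = e • lam z)
    (hE : ∀ x q, D x = e • q → ∃ z v, x = D1 z + e • v) (y : A2 × Z) (x : A1 × X)
    (h : D2 y = e • x) : ∃ w' z v, y = (d3 w', 0) + H2 z + e • v := by
  obtain ⟨w, x2⟩ := y
  obtain ⟨p, q⟩ := x
  obtain ⟨z, v, hz⟩ := hE x2 q (by
    have := congrArg Prod.snd h
    rw [hD2] at this
    exact this)
  have h5 : (w, x2) - H2 z = (w - (H2 z).1, e • v) := by
    refine Prod.ext rfl ?_
    change x2 - (H2 z).2 = e • v
    rw [hH2, hz]; abel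
  have h6 : D2 ((w, x2) - H2 z) = e • ((p, q) - z) := by rw [map_sub, h, hDH, smul_sub]
  rw [h5, hD2] at h6
  have h7 : d2 (w - (H2 z).1) + lam (e • v) = e • (p - z.1) := congrArg Prod.fst h6
  obtain ⟨w', v', h8⟩ := hY (w - (H2 z).1) (p - z.1 - lam v) (by
    rw [smul_sub, ← h7, hlam]; abel)
  refine ⟨w', z, (v', v), ?_⟩
  rw [← sub_add_cancel (w, x2) (H2 z), h5, h8]
  refine Prod.ext ?_ ?_
  · simp; abel
  · simp [add_comm]

theorem ex_aux1 {A2 A1 Z : Type} [AddCommGroup A2] [Module Q A2]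
    [AddCommGroup A1] [Module Q A1] [AddCommGroup Z] [Module Q Z]
    (e : Q) (d2 : A2 →ₗ[Q] A1) (d1 : A1 →ₗ[Q] Z)
    (hY : ∀ w v, d1 w = e • v → ∃ w' v', w = d2 w' + e • v')
    (D2 : A1 × Q →ₗ[Q] Z) (H2 : Z →ₗ[Q] A1 × Q) (D : Z →ₗ[Q] Q) (yt : Z)
    (hD2 : ∀ w q, D2 (w, q) = d1 w + q • yt)
    (hH2 : ∀ z, (H2 z).2 = D z) (hDH : ∀ z, D2 (H2 z) = e • z)
    (key : ∀ q w t, d1 w + q • yt = e • t → ∃ u, D u = q) (y : A1 × Q) (x : Z)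
    (h : D2 y = e • x) : ∃ w' z v, y = (d2 w', 0) + H2 z + e • v := by
  obtain ⟨w, q⟩ := y
  obtain ⟨u, hu⟩ := key q w x (by rw [← hD2, h])
  have h5 : (w, q) - H2 u = (w - (H2 u).1, 0) := by
    refine Prod.ext rfl ?_
    change q - (H2 u).2 = 0
    rw [hH2, hu, sub_self]
  have h6 : D2 ((w, q) - H2 u) = e • (x - u) := by rw [map_sub, h, hDH, smul_sub]
  rw [h5, hD2, zero_smul, add_zero] at h6
  obtain ⟨w', v', h8⟩ := hY _ _ h6
  refine ⟨w', u, (v', 0), ?_⟩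
  rw [← sub_add_cancel (w, q) (H2 u), h5, h8]
  refine Prod.ext ?_ ?_
  · simp; abel
  · simp

theorem Stage.Ex_next_next (s : Stage a Y dY i) (hp hx hp' hx') (c : Fin r → Q) (e : Q)
    (he : ∑ j, a j * c j = e)
    (hE : s.Ex c e) (hY : YD dY e (i + 1)) : ((s.next hp hx).next hp' hx').Ex c e := by
  refine ex_aux (A3 := Y (i + 3)) (A2 := Y (i + 2)) (A1 := Y (i + 1)) (Z := s.Z) (X := s.X)
    e (dY (i + 2)) (dY (i + 1)) hY (((s.next hp hx).next hp' hx').dc c)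
    (((s.next hp hx).next hp' hx').hc c) ((s.next hp hx).dc c) (s.dc c)
    (fun z => ev c (Y (i + 1)) (s.lam z)) ?_ ?_ ?_ ?_ ?_
  · intro w x
    refine ((s.next hp hx).next_dc hp' hx' c w x).trans ?_
    refine (congrArg (fun t => (s.next hp hx).inc (dY (i + 1) w) + t) (s.next_hc hp hx c x)).trans ?_
    refine Prod.ext rfl ?_
    exact zero_add (s.dc c x)
  · intro z
    exact congrArg Prod.snd ((s.next hp hx).next_hc hp' hx' c z)
  · intro z
    refine (((s.next hp hx).next hp' hx').dc_hc c z).trans ?_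
    rw [he]; rfl
  · intro z
    rw [map_smul, map_smul]
  · intro x q hxq
    obtain ⟨w, x', v, h⟩ := hE x q hxq
    exact ⟨(w, x'), v, h.trans (congrArg (· + e • v) (s.next_dc hp hx c w x').symm)⟩

end YD

section PP

variable {Q : Type} [CommRing Q] [IsLocalRing Q] {f g : Q}
    {P : Type} [AddCommGroup P] [Module Q P] (d : P →ₗ[Q] Q) {r : ℕ} (x : Fin r → P)
    (a b : Fin r → Q)

theorem K_f (y : P) (hannf : ∀ x : Q, x * f = 0 ↔ x ∈ Ideal.span {g})
    (hc : ∀ p p', d p • p' = d p' • p) (hr : LinearMap.range d = maximalIdeal Q)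
    (hy : d y = f) (hk : ∀ z, d z = 0 → ∃ q : Q, z = q • g • y)
    (hm : ∀ q : Q, q • g • y = 0 → q ∈ maximalIdeal Q) (p : P) (hp : f • p = 0) :
    ∃ t, p = g • t := by
  have h1 : d p * f = 0 := by
    have := congrArg d hp
    rw [map_smul, map_zero, smul_eq_mul] at this
    rw [mul_comm]; exact this
  obtain ⟨c, h2⟩ := Ideal.mem_span_singleton'.1 ((hannf _).1 h1)
  have h3 : c • g • y = 0 := by
    rw [smul_smul, h2, hc p y, hy, hp]
  have h4 := hm _ h3
  rw [← hr] at h4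
  obtain ⟨u, rfl⟩ := h4
  obtain ⟨q, hq⟩ := hk (p - g • u) (by rw [map_sub, map_smul, smul_eq_mul, ← h2, mul_comm, sub_self])
  refine ⟨u + q • y, ?_⟩
  rw [smul_add, smul_comm g q, ← hq]; abel

theorem K_g (y : P) (hanng : ∀ x : Q, x * g = 0 ↔ x ∈ Ideal.span {f})
    (hc : ∀ p p', d p • p' = d p' • p) (hr : LinearMap.range d = maximalIdeal Q)
    (hy : d y = f) (hk : ∀ z, d z = 0 → ∃ q : Q, z = q • g • y)
    (hm : ∀ q : Q, q • g • y = 0 → q ∈ maximalIdeal Q) (p : P) (hp : g • p = 0) :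
    ∃ t, p = f • t := by
  have h1 : d p * g = 0 := by
    have := congrArg d hp
    rw [map_smul, map_zero, smul_eq_mul] at this
    rw [mul_comm]; exact this
  obtain ⟨c, h2⟩ := Ideal.mem_span_singleton'.1 ((hanng _).1 h1)
  obtain ⟨q, hq⟩ := hk (p - c • y) (by rw [map_sub, map_smul, smul_eq_mul, hy, h2, sub_self])
  have h3 : p = (c + q * g) • y := by
    rw [add_smul, mul_smul, ← hq]; abel
  have h4 := hm (c + q * g) (by rw [smul_comm, ← h3, hp])
  rw [← hr] at h4
  obtain ⟨u, hu⟩ := h4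
  exact ⟨u, by rw [h3, ← hu, hc, hy]⟩

variable {Y : ℕ → Type} [∀ n, AddCommGroup (Y n)] [∀ n, Module Q (Y n)]
  {dY : ∀ n, Y (n + 1) →ₗ[Q] Y n} (ε : Y 0 →ₗ[Q] P)

/-- base δ -/
noncomputable def bδ (r : ℕ) : Y 0 →ₗ[Q] (BB Q r) ⊗[Q] Q := TensorProduct.mk Q (BB Q r) Q 1 ∘ₗ d ∘ₗ ε

theorem bδ_apply (y : Y 0) : bδ d ε r y = 1 ⊗ₜ d (ε y) := rfl

/-- base η -/
noncomputable def bη (xt : Fin r → Y 0) : Q →ₗ[Q] (BB Q r) ⊗[Q] Y 0 :=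
  LinearMap.toSpanSingleton Q _ (∑ j, (MvPolynomial.X j : BB Q r) ⊗ₜ xt j)

theorem bη_apply (xt : Fin r → Y 0) (q : Q) :
    bη xt q = q • ∑ j, (MvPolynomial.X j : BB Q r) ⊗ₜ[Q] xt j := by
  simp [bη]

theorem phi_tmul {N : Type} [AddCommGroup N] [Module Q N] (n : N) :
    phi a • ((1 : BB Q r) ⊗ₜ[Q] n) = ∑ j, (MvPolynomial.X j : BB Q r) ⊗ₜ[Q] (a j • n) := by
  rw [TensorProduct.smul_tmul', smul_eq_mul, mul_one, phi, TensorProduct.sum_tmul]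
  refine Finset.sum_congr rfl fun j _ => ?_
  rw [← MvPolynomial.smul_eq_C_mul, TensorProduct.smul_tmul]

/-- The base stage. -/
noncomputable def baseStage (hY0 : Module.Projective Q (Y 0))
    (hc : ∀ p p', d p • p' = d p' • p) (hε : Function.Surjective ε)
    (hε0 : Function.Exact (dY 0) ε) (hx : ∀ j, d (x j) = a j)
    (xt : Fin r → Y 0) (hxt : ∀ j, ε (xt j) = x j) : Stage a Y dY 0 where
  X := Q
  Z := Y 0
  projX := inferInstance
  projZ := hY0
  inc := LinearMap.id
  pr := LinearMap.id
  pr_inc := fun _ => rfl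
  δ := bδ d ε r
  η := bη xt
  h1 := fun w => by
    rw [bδ_apply, LinearMap.id_apply, hε0.apply_apply_eq_zero]; simp
  h2 := fun q => by
    rw [bη_apply, phi_tmul, LinearMap.map_smul_of_tower, map_sum, Finset.smul_sum]
    refine Finset.sum_congr rfl fun j _ => ?_
    rw [hat_tmul, bδ_apply, hxt, hx, TensorProduct.smul_tmul', smul_eq_mul, mul_one,
      ← TensorProduct.tmul_smul, smul_eq_mul, smul_eq_mul, mul_comm]
  h3 := fun y => by
    simp
  h4 := fun y => by
    have hex' : Function.Exact ((dY 0).baseChange (BB Q r)) (ε.baseChange (BB Q r)) :=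
      lTensor_exact (BB Q r) hε0 hε
    refine (hex' _).1 ?_
    have e1 : (LinearMap.id : Y 0 →ₗ[Q] Y 0).baseChange (BB Q r) (hat (bη xt) (bδ d ε r y)) =
        d (ε y) • ∑ j, (MvPolynomial.X j : BB Q r) ⊗ₜ[Q] xt j := by
      rw [bδ_apply, hat_tmul, one_smul, bη_apply, LinearMap.baseChange_id, LinearMap.id_apply]
    rw [e1, phi_tmul, map_sub, map_sum, LinearMap.map_smul_of_tower, map_sum, Finset.smul_sum,
      ← Finset.sum_sub_distrib]
    refine Finset.sum_eq_zero fun j _ => ?_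
    rw [LinearMap.baseChange_tmul, LinearMap.baseChange_tmul, hxt, ← TensorProduct.tmul_smul,
      ← TensorProduct.tmul_sub, LinearMap.id_apply, map_smul, ← hx j, hc, sub_self,
      TensorProduct.tmul_zero]

section

variable (hY0 : Module.Projective Q (Y 0))
    (hc : ∀ p p', d p • p' = d p' • p) (hε : Function.Surjective ε)
    (hε0 : Function.Exact (dY 0) ε) (hx : ∀ j, d (x j) = a j)
    (xt : Fin r → Y 0) (hxt : ∀ j, ε (xt j) = x j) (c : Fin r → Q) (e : Q)

theorem base_dc (y : Y 0) :
    (baseStage d x a ε hY0 hc hε hε0 hx xt hxt).dc c y = d (ε y) := by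
  change ev c Q (bδ d ε r y) = _
  rw [bδ_apply, ev_tmul]; simp

theorem base_hc (q : Q) :
    (baseStage d x a ε hY0 hc hε hε0 hx xt hxt).hc c q = (q • ∑ j, c j • xt j : Y 0) := by
  change ev c (Y 0) (bη xt q) = _
  rw [bη_apply, map_smul, map_sum]
  simp [ev_tmul]

theorem base_Ex (H0 : ∀ (p : P) (q : Q), d p = e * q → ∃ q' : Q, p = q' • ∑ j, c j • x j) :
    (baseStage d x a ε hY0 hc hε hε0 hx xt hxt).Ex c e := by
  intro (y : Y 0) (q : Q) h
  rw [base_dc] at h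
  obtain ⟨q', hq'⟩ := H0 _ _ h
  have h1 : ε (y - q' • ∑ j, c j • xt j) = 0 := by
    rw [map_sub, map_smul, map_sum]
    simp [hxt, hq']
  obtain ⟨w, hw⟩ := (hε0 _).1 h1
  refine ⟨w, q', 0, ?_⟩
  rw [base_hc, smul_zero, add_zero]
  change y = dY 0 w + _
  rw [hw]; exact (sub_add_cancel _ _).symm

theorem base_next_Ex (hr : LinearMap.range d = maximalIdeal Q)
    (H1 : ∀ (p : P) (q : Q), q • ∑ j, c j • x j = e • p → q ∈ maximalIdeal Q)
    (he : ∑ j, a j * c j = e) (hY : YD dY e 0) (hp hex) :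
    ((baseStage d x a ε hY0 hc hε hε0 hx xt hxt).next hp hex).Ex c e := by
  refine ex_aux1 (A2 := Y 2) (A1 := Y 1) (Z := Y 0) e (dY 1) (dY 0) hY
    (((baseStage d x a ε hY0 hc hε hε0 hx xt hxt).next hp hex).dc c)
    (((baseStage d x a ε hY0 hc hε hε0 hx xt hxt).next hp hex).hc c) (d ∘ₗ ε)
    (∑ j, c j • xt j) ?_ ?_ ?_ ?_
  · intro w q
    refine ((baseStage d x a ε hY0 hc hε hε0 hx xt hxt).next_dc hp hex c w q).trans ?_
    exact congrArg (fun t : Y 0 => dY 0 w + t) (base_hc d x a ε hY0 hc hε hε0 hx xt hxt c q)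
  · intro z
    refine (congrArg Prod.snd ((baseStage d x a ε hY0 hc hε hε0 hx xt hxt).next_hc hp hex c z)).trans ?_
    exact base_dc d x a ε hY0 hc hε hε0 hx xt hxt c z
  · intro z
    refine (((baseStage d x a ε hY0 hc hε hε0 hx xt hxt).next hp hex).dc_hc c z).trans ?_
    rw [he]; rfl
  · intro q w t h
    have h1 : q • ∑ j, c j • x j = e • ε t := by
      have := congrArg ε h
      rw [map_add, hε0.apply_apply_eq_zero, zero_add, map_smul, map_sum, map_smul] at this
      simpa [hxt] using this
    have hq := H1 _ _ h1
    rw [← hr] at hq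
    obtain ⟨u, rfl⟩ := hq
    obtain ⟨u, rfl⟩ := hε u
    exact ⟨u, rfl⟩
end

end PP

end BettiEZ



namespace BettiEZ

open IsLocalRing

section Seq

variable {Q : Type} [CommRing Q]
  {Y : ℕ → Type} [∀ n, AddCommGroup (Y n)] [∀ n, Module Q (Y n)]
  {dY : ∀ n, Y (n + 1) →ₗ[Q] Y n} {r : ℕ} {a : Fin r → Q}
  (hp : ∀ n, Module.Projective Q (Y n)) (hex : ∀ n, Function.Exact (dY (n + 1)) (dY n))
  (s0 : Stage a Y dY 0)

/-- The sequence of stages. -/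
noncomputable def st : ∀ n, Stage a Y dY n
  | 0 => s0
  | n + 1 => (st n).next (hp (n + 1)) (hex n)

theorem st_Ex (c : Fin r → Q) (e : Q) (he : ∑ j, a j * c j = e)
    (hE0 : s0.Ex c e) (hE1 : (s0.next (hp 1) (hex 0)).Ex c e) (hY : ∀ n, YD dY e n) :
    ∀ n, (st hp hex s0 n).Ex c e
  | 0 => hE0
  | 1 => hE1
  | n + 2 => (st hp hex s0 n).Ex_next_next _ _ _ _ c e he (st_Ex c e he hE0 hE1 hY n) (hY _)

/-- The modules of the resolution. -/
abbrev FF (n : ℕ) : Type := (st hp hex s0 n).X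

/-- The differentials of the resolution. -/
noncomputable def DD (c : Fin r → Q) (n : ℕ) : FF hp hex s0 (n + 1) →ₗ[Q] FF hp hex s0 n :=
  (st hp hex s0 n).dc c

theorem DD_succ (c : Fin r → Q) (n : ℕ) (w : Y (n + 1)) (x : FF hp hex s0 n) :
    DD hp hex s0 c (n + 1) ((w, x) : Y (n + 1) × (st hp hex s0 n).X) =
      (st hp hex s0 n).inc (dY n w) + (st hp hex s0 n).hc c x :=
  (st hp hex s0 n).next_dc _ _ c w x

theorem DD_DD (c : Fin r → Q) (e : Q) (he : ∑ j, a j * c j = e) (n : ℕ)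
    (y : FF hp hex s0 (n + 2)) : ∃ v, DD hp hex s0 c n (DD hp hex s0 c (n + 1) y) = e • v := by
  obtain ⟨w, x⟩ := y
  refine ⟨x, ?_⟩
  refine (congrArg (DD hp hex s0 c n) (DD_succ hp hex s0 c n w x)).trans ?_
  refine ((st hp hex s0 n).dc c).map_add _ _ |>.trans ?_
  rw [(st hp hex s0 n).dc_hc, he]
  have : (st hp hex s0 n).dc c ((st hp hex s0 n).inc (dY n w)) = 0 := by
    rw [Stage.dc, LinearMap.comp_apply, (st hp hex s0 n).h1, map_zero]
  rw [this, zero_add]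

theorem DD_ex (c : Fin r → Q) (e : Q) (n : ℕ) (hE : (st hp hex s0 n).Ex c e)
    (y : FF hp hex s0 (n + 1)) (x : FF hp hex s0 n) (h : DD hp hex s0 c n y = e • x) :
    ∃ z v, y = DD hp hex s0 c (n + 1) z + e • v := by
  obtain ⟨w, x', v, h1⟩ := hE y x h
  exact ⟨(w, x'), v, h1.trans (congrArg (fun t : (st hp hex s0 n).Z => t + e • v)
    (DD_succ hp hex s0 c n w x').symm)⟩

theorem DD_sub (J : Ideal Q) (c c' : Fin r → Q) (h : ∀ j, c j - c' j ∈ J) (n : ℕ)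
    (y : FF hp hex s0 (n + 1)) :
    DD hp hex s0 c n y - DD hp hex s0 c' n y ∈ J • (⊤ : Submodule Q (FF hp hex s0 n)) :=
  ev_sub_mem J c c' h _

end Seq

theorem exists_F (Q : Type) [CommRing Q] [IsLocalRing Q] (f g : Q)
    (hgm : g ∈ maximalIdeal Q)
    (hannf : ∀ x : Q, x * f = 0 ↔ x ∈ Ideal.span {g})
    (hanng : ∀ x : Q, x * g = 0 ↔ x ∈ Ideal.span {f})
    {r : ℕ} (a b : Fin r → Q) (ha : ∀ j, a j ∈ maximalIdeal Q) (hab : ∑ j, a j * b j = f)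
    (J : Ideal Q) (hJ : ∀ j, b j ∈ J) :
    ∃ (F : ℕ → Type) (_ : ∀ n, AddCommGroup (F n)) (_ : ∀ n, Module Q (F n))
      (D D' : ∀ n, F (n + 1) →ₗ[Q] F n) (ι : F 0 ≃ₗ[Q] Q),
      (∀ n, Module.Projective Q (F n)) ∧
      (∀ n, Function.Exact (D (n + 1)) (D n)) ∧
      (∀ n y, ∃ v, D' n (D' (n + 1) y) = f • v) ∧
      (∀ n y x, D' n y = f • x → ∃ z v, y = D' (n + 1) z + f • v) ∧
      (∀ q, q ∈ maximalIdeal Q ↔ ∃ y, ι (D 0 y) = q) ∧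
      (∀ q, q ∈ maximalIdeal Q ↔ ∃ y, ι (D' 0 y) = q) ∧
      (∀ n y, D n y - D' n y ∈ J • (⊤ : Submodule Q (F n))) := by
  obtain ⟨P, _, _, d, x, hc, hr, hx, hk, hm⟩ := exists_P Q f g hgm hannf hanng a b ha hab
  obtain ⟨Y, _, _, dY, ε, hp, hε, hε0, hex⟩ := exists_res Q P
  choose xt hxt using fun j => hε (x j)
  have hgf : g * f = 0 := (hannf g).2 (Ideal.mem_span_singleton_self g)
  have hfg : f * g = 0 := by rw [mul_comm, hgf]
  have hy : d (∑ j, b j • x j) = f := by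
    simp only [map_sum, map_smul, hx, smul_eq_mul, ← hab]
    exact Finset.sum_congr rfl fun j _ => mul_comm _ _
  have hgb : ∑ j, (g * b j) • x j = g • ∑ j, b j • x j := by
    rw [Finset.smul_sum]; exact Finset.sum_congr rfl fun j _ => mul_smul _ _ _
  have hYf : ∀ n, YD dY f n ∧ YD dY g n := by
    intro n
    induction n with
    | zero => exact ⟨YD_base dY ε hε hε0 hex hfg (K_f d _ hannf hc hr hy hk hm),
        YD_base dY ε hε hε0 hex hgf (K_g d _ hanng hc hr hy hk hm)⟩
    | succ n ih => exact ⟨YD_succ dY hp hex hfg (fun x => (hannf x).1) n ih.2,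
        YD_succ dY hp hex hgf (fun x => (hanng x).1) n ih.1⟩
  have he0 : ∑ j, a j * (g * b j) = 0 := by
    rw [← hgf, ← hab, Finset.mul_sum]
    exact Finset.sum_congr rfl fun j _ => by ring
  let s0 : Stage a Y dY 0 := baseStage d x a ε (hp 0) hc hε hε0 hx xt hxt
  have E0 : ∀ n, (st hp hex s0 n).Ex (fun j => g * b j) 0 := by
    refine st_Ex hp hex s0 _ 0 he0 ?_ ?_ (YD_zero_elt dY hex)
    · refine base_Ex d x a ε (hp 0) hc hε hε0 hx xt hxt _ 0 ?_
      intro p q hpq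
      rw [zero_mul] at hpq
      rw [hgb]
      exact hk p hpq
    · refine base_next_Ex d x a ε (hp 0) hc hε hε0 hx xt hxt _ 0 hr ?_ he0
        (YD_zero_elt dY hex 0) _ _
      intro p q hpq
      rw [zero_smul, hgb] at hpq
      exact hm q hpq
  have Ef : ∀ n, (st hp hex s0 n).Ex b f := by
    refine st_Ex hp hex s0 _ f hab ?_ ?_ (fun n => (hYf n).1)
    · refine base_Ex d x a ε (hp 0) hc hε hε0 hx xt hxt _ f ?_
      intro p q hpq
      obtain ⟨q', hq'⟩ := hk (p - q • ∑ j, b j • x j) (by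
        rw [map_sub, map_smul, hy, hpq, smul_eq_mul, mul_comm, sub_self])
      refine ⟨q + q' * g, ?_⟩
      rw [add_smul, mul_smul, ← hq']; abel
    · refine base_next_Ex d x a ε (hp 0) hc hε hε0 hx xt hxt _ f hr ?_ hab (hYf 0).1 _ _
      intro p q hpq
      have h1 := congrArg d hpq
      rw [map_smul, map_smul, hy, smul_eq_mul, smul_eq_mul] at h1
      have h2 := (hannf (q - d p)).1 (by rw [sub_mul, h1]; ring)
      have h3 : q - d p ∈ maximalIdeal Q :=
        (Ideal.span_singleton_le_iff_mem _).2 hgm h2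
      have h4 : d p ∈ maximalIdeal Q := by rw [← hr]; exact ⟨p, rfl⟩
      have := Ideal.add_mem _ h3 h4
      rwa [sub_add_cancel] at this
  have hb : ∀ (c : Fin r → Q) (q : Q), q ∈ maximalIdeal Q ↔ ∃ y, d (ε y) = q := by
    intro c q
    rw [← hr]
    constructor
    · rintro ⟨p, rfl⟩
      obtain ⟨y, rfl⟩ := hε p
      exact ⟨y, rfl⟩
    · rintro ⟨y, rfl⟩
      exact ⟨_, rfl⟩
  have hb' : ∀ (c : Fin r → Q) (q : Q), q ∈ maximalIdeal Q ↔
      ∃ y, (LinearEquiv.refl Q Q) (DD hp hex s0 c 0 y) = q := by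
    intro c q
    rw [hb c]
    refine exists_congr fun y => ?_
    exact Eq.congr (base_dc d x a ε (hp 0) hc hε hε0 hx xt hxt c y).symm rfl
  refine ⟨FF hp hex s0, inferInstance, inferInstance, DD hp hex s0 (fun j => g * b j),
    DD hp hex s0 b, LinearEquiv.refl Q Q, fun n => (st hp hex s0 n).projX, ?_, ?_, ?_, hb' _, hb' _,
    ?_⟩
  · intro n y
    constructor
    · intro h
      obtain ⟨z, v, hz⟩ := DD_ex hp hex s0 _ 0 n (E0 n) y 0 (by rw [h, smul_zero])
      exact ⟨z, by rw [hz, zero_smul, add_zero]⟩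
    · rintro ⟨z, rfl⟩
      obtain ⟨v, hv⟩ := DD_DD hp hex s0 _ 0 he0 n z
      rw [hv, zero_smul]
  · exact DD_DD hp hex s0 b f hab
  · intro n y x h
    exact DD_ex hp hex s0 b f n (Ef n) y x h
  · exact fun n y => DD_sub hp hex s0 J _ _ (fun j =>
      J.sub_mem (J.mul_mem_left _ (hJ j)) (hJ j)) n y

end BettiEZ


namespace BettiEZ

section mkRes
variable {A : Type} [CommRing A] (F : ℕ → Type) [∀ n, AddCommGroup (F n)] [∀ n, Module A (F n)]
  (D : ∀ n, F (n + 1) →ₗ[A] F n) (K : Type) [AddCommGroup K] [Module A K]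

/-- The chain complex attached to an exact sequence of modules. -/
noncomputable def mkCpx (hD : ∀ n, Function.Exact (D (n + 1)) (D n)) :
    ChainComplex (ModuleCat.{0} A) ℕ :=
  ChainComplex.of (fun n => ModuleCat.of A (F n)) (fun n => ModuleCat.ofHom (D n))
    (fun n => by
      ext x
      exact (hD n).apply_apply_eq_zero x)

theorem mkCpx_d (hD : ∀ n, Function.Exact (D (n + 1)) (D n)) (n : ℕ) :
    (mkCpx F D hD).d (n + 1) n = ModuleCat.ofHom (D n) :=
  ChainComplex.of_d (fun n => ModuleCat.of A (F n)) (fun n => ModuleCat.ofHom (D n)) n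

theorem mkCpx_exactAt (hD : ∀ n, Function.Exact (D (n + 1)) (D n)) (n : ℕ) :
    (mkCpx F D hD).ExactAt (n + 1) := by
  rw [HomologicalComplex.exactAt_iff' _ (n + 1 + 1) (n + 1) n (by simp) (by simp)]
  rw [ShortComplex.ShortExact.moduleCat_exact_iff_function_exact]
  have h1 : (mkCpx F D hD).d (n + 1 + 1) (n + 1) = ModuleCat.ofHom (D (n + 1)) :=
    mkCpx_d F D hD _
  have h2 : (mkCpx F D hD).d (n + 1) n = ModuleCat.ofHom (D n) :=
    mkCpx_d F D hD _
  simp only [HomologicalComplex.sc', HomologicalComplex.shortComplexFunctor', h1, h2]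
  exact hD n

/-- The projective resolution attached to an exact sequence of projective modules. -/
noncomputable def mkRes (hD : ∀ n, Function.Exact (D (n + 1)) (D n))
    (hF : ∀ n, Module.Projective A (F n))
    (p : F 0 →ₗ[A] K) (hp : Function.Surjective p) (hp0 : Function.Exact (D 0) p) :
    ProjectiveResolution (ModuleCat.of A K) where
  complex := mkCpx F D hD
  projective n := (IsProjective.iff_projective (F n)).1 (hF n)
  π := (ChainComplex.toSingle₀Equiv _ _).symm ⟨ModuleCat.ofHom p, by
    have h1 : (mkCpx F D hD).d 1 0 = ModuleCat.ofHom (D 0) :=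
      mkCpx_d F D hD _
    rw [h1]
    ext x
    exact hp0.apply_apply_eq_zero x⟩
  quasiIso := ⟨fun n => by
    cases n
    · rw [ChainComplex.quasiIsoAt₀_iff, ShortComplex.quasiIso_iff_of_zeros']
      · have h1 : (mkCpx F D hD).d 1 0 = ModuleCat.ofHom (D 0) :=
          mkCpx_d F D hD _
        have h2 : ∀ h, ((ChainComplex.toSingle₀Equiv (mkCpx F D hD) (ModuleCat.of A K)).symm
          ⟨ModuleCat.ofHom p, h⟩).f 0 = ModuleCat.ofHom p := fun h =>
            ChainComplex.toSingle₀Equiv_symm_apply_f_zero _ _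
        constructor
        · rw [ShortComplex.ShortExact.moduleCat_exact_iff_function_exact]
          simp only [HomologicalComplex.shortComplexFunctor', h1]
          erw [h2]
          exact hp0
        · simp only [HomologicalComplex.shortComplexFunctor']
          erw [h2]
          exact (ModuleCat.epi_iff_surjective _).2 hp
      all_goals rfl
    · rw [quasiIsoAt_iff_exactAt']
      · apply mkCpx_exactAt
      · apply ChainComplex.exactAt_succ_single_obj⟩
end mkRes
end BettiEZ


namespace BettiEZ

section tor
variable {Q R : Type} [CommRing Q] [CommRing R] [Algebra Q R]
  (F : ℕ → Type) [∀ n, AddCommGroup (F n)] [∀ n, Module Q (F n)]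
  (D D' : ∀ n, F (n + 1) →ₗ[Q] F n)
  (M : Type) [AddCommGroup M] [Module Q M] [Module R M] [IsScalarTower Q R M]

/-- The degreewise comparison, as a linear equivalence. -/
noncomputable def cmpL (n : ℕ) :
    ((ModuleCat.restrictScalars (algebraMap Q R)).obj
      (ModuleCat.of R (M ⊗[R] (R ⊗[Q] F n)))) ≃ₗ[Q] (ModuleCat.of Q (M ⊗[Q] F n)) where
  toFun := TensorProduct.AlgebraTensorModule.cancelBaseChange Q R R M (F n)
  invFun := (TensorProduct.AlgebraTensorModule.cancelBaseChange Q R R M (F n)).symm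
  left_inv := (TensorProduct.AlgebraTensorModule.cancelBaseChange Q R R M (F n)).symm_apply_apply
  right_inv := (TensorProduct.AlgebraTensorModule.cancelBaseChange Q R R M (F n)).apply_symm_apply
  map_add' := map_add (TensorProduct.AlgebraTensorModule.cancelBaseChange Q R R M (F n))
  map_smul' := fun q x => by
    have := map_smul (TensorProduct.AlgebraTensorModule.cancelBaseChange Q R R M (F n))
      (algebraMap Q R q) x
    refine this.trans ?_
    exact algebraMap_smul R q _

/-- The degreewise comparison. -/
noncomputable def cmp₀ (n : ℕ) :
    ((ModuleCat.restrictScalars (algebraMap Q R)).obj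
      (ModuleCat.of R (M ⊗[R] (R ⊗[Q] F n)))) ≅ (ModuleCat.of Q (M ⊗[Q] F n)) where
  hom := ConcreteCategory.ofHom (C := ModuleCat Q) (cmpL F M n).toLinearMap
  inv := ConcreteCategory.ofHom (C := ModuleCat Q) (cmpL F M n).symm.toLinearMap
  hom_inv_id := by
    ext x
    exact (cmpL F M n).symm_apply_apply x
  inv_hom_id := by
    apply ModuleCat.hom_ext
    refine LinearMap.ext fun x => ?_
    exact (cmpL F M n).apply_symm_apply x

/-- The degreewise comparison. -/
noncomputable def cmp (n : ℕ) :
    (ModuleCat.restrictScalars (algebraMap Q R)).obj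
      (((MonoidalCategory.tensoringLeft (ModuleCat.{0} R)).obj (ModuleCat.of R M)).obj
        (ModuleCat.of R (R ⊗[Q] F n))) ≅
    ((MonoidalCategory.tensoringLeft (ModuleCat.{0} Q)).obj (ModuleCat.of Q M)).obj
      (ModuleCat.of Q (F n)) := cmp₀ F M n

theorem tmul_eq_zero_of_mem {N : Type} [AddCommGroup N] [Module Q N] (m : M) (y : N)
    (hy : y ∈ Module.annihilator Q M • (⊤ : Submodule Q N)) : m ⊗ₜ[Q] y = 0 := by
  induction hy using Submodule.smul_induction_on' with
  | smul r hr n hn =>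
    rw [← TensorProduct.smul_tmul, Module.mem_annihilator.1 hr m, TensorProduct.zero_tmul]
  | add x hx y hy h1 h2 => rw [TensorProduct.tmul_add, h1, h2, add_zero]

variable {F} in
theorem cmp_comm (j : ℕ) (D D' : ∀ n, F (n + 1) →ₗ[Q] F n)
    (hDD : ∀ n y, D n y - D' n y ∈ Module.annihilator Q M • (⊤ : Submodule Q (F n)))
    (x : M ⊗[R] (R ⊗[Q] F (j + 1))) :
    (D j).lTensor M (TensorProduct.AlgebraTensorModule.cancelBaseChange Q R R M (F (j + 1)) x) =
    TensorProduct.AlgebraTensorModule.cancelBaseChange Q R R M (F j)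
      (((D' j).baseChange R).lTensor M x) := by
  induction x using TensorProduct.induction_on with
  | zero => simp
  | add x y hx hy => simp only [map_add, hx, hy]
  | tmul m t =>
    induction t using TensorProduct.induction_on with
    | zero => simp
    | add x y hx hy => simp only [TensorProduct.tmul_add, map_add, hx, hy]
    | tmul r y =>
      simp only [LinearMap.lTensor_tmul, LinearMap.baseChange_tmul,
        TensorProduct.AlgebraTensorModule.cancelBaseChange_tmul]
      rw [← sub_eq_zero, ← TensorProduct.tmul_sub]
      exact tmul_eq_zero_of_mem M _ _ (hDD j y)

/-- Comparison of complexes. -/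
noncomputable def cmpCpx (hD : ∀ n, Function.Exact (D (n + 1)) (D n))
    (hD' : ∀ n, Function.Exact ((D' (n + 1)).baseChange R) ((D' n).baseChange R))
    (hDD : ∀ n y, D n y - D' n y ∈ Module.annihilator Q M • (⊤ : Submodule Q (F n))) :
    ((ModuleCat.restrictScalars (algebraMap Q R)).mapHomologicalComplex _).obj
      ((((MonoidalCategory.tensoringLeft (ModuleCat.{0} R)).obj
        (ModuleCat.of R M)).mapHomologicalComplex _).obj
        (mkCpx (fun n => R ⊗[Q] F n) (fun n => (D' n).baseChange R) hD')) ≅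
    (((MonoidalCategory.tensoringLeft (ModuleCat.{0} Q)).obj
        (ModuleCat.of Q M)).mapHomologicalComplex _).obj (mkCpx F D hD) :=
  HomologicalComplex.Hom.isoOfComponents (fun n => cmp F M n) (by
    intro i j hij
    obtain rfl : j + 1 = i := hij
    simp only [Functor.mapHomologicalComplex_obj_d, mkCpx_d]
    apply ModuleCat.hom_ext
    refine LinearMap.ext fun x => ?_
    exact cmp_comm M j D D' hDD x)

/-- Comparison of Tor. -/
theorem cmpTor (K K' : Type) [AddCommGroup K] [Module Q K] [AddCommGroup K'] [Module R K']
    (hD : ∀ n, Function.Exact (D (n + 1)) (D n))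
    (hD' : ∀ n, Function.Exact ((D' (n + 1)).baseChange R) ((D' n).baseChange R))
    (hDD : ∀ n y, D n y - D' n y ∈ Module.annihilator Q M • (⊤ : Submodule Q (F n)))
    (hF : ∀ n, Module.Projective Q (F n))
    (p : F 0 →ₗ[Q] K) (hp : Function.Surjective p) (hp0 : Function.Exact (D 0) p)
    (p' : R ⊗[Q] F 0 →ₗ[R] K') (hp' : Function.Surjective p')
    (hp0' : Function.Exact ((D' 0).baseChange R) p') (i : ℕ) :
    Nonempty ((ModuleCat.restrictScalars (algebraMap Q R)).obj
      (((Tor (ModuleCat R) i).obj (ModuleCat.of R M)).obj (ModuleCat.of R K')) ≅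
      (((Tor (ModuleCat Q) i).obj (ModuleCat.of Q M)).obj (ModuleCat.of Q K))) := by
  let P := mkRes F D K hD hF p hp hp0
  let P' := mkRes (fun n => R ⊗[Q] F n) (fun n => (D' n).baseChange R) K' hD'
    (fun n => inferInstance) p' hp' hp0'
  let T := (MonoidalCategory.tensoringLeft (ModuleCat.{0} Q)).obj (ModuleCat.of Q M)
  let T' := (MonoidalCategory.tensoringLeft (ModuleCat.{0} R)).obj (ModuleCat.of R M)
  let e1 := P.isoLeftDerivedObj T i
  let e2 := P'.isoLeftDerivedObj T' i
  let e3 := (HomologicalComplex.homologyFunctor _ _ i).mapIso (cmpCpx F D D' M hD hD' hDD)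
  let e4 := (((T'.mapHomologicalComplex _).obj P'.complex).sc i).mapHomologyIso
    (ModuleCat.restrictScalars (algebraMap Q R))
  exact ⟨(ModuleCat.restrictScalars (algebraMap Q R)).mapIso e2 ≪≫ e4.symm ≪≫ e3 ≪≫ e1.symm⟩
end tor
end BettiEZ


namespace BettiEZ

section finrank
open IsLocalRing

theorem finrank_cmp {Q R : Type} [CommRing Q] [CommRing R] [Algebra Q R] [IsLocalRing Q]
    [IsLocalRing R] (hs : Function.Surjective (algebraMap Q R))
    (X Y : Type) [AddCommGroup X] [Module R X] [Module Q X] [IsScalarTower Q R X]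
    [AddCommGroup Y] [Module Q Y] (e : X ≃ₗ[Q] Y) :
    Module.finrank (ResidueField R) (ResidueField R ⊗[R] X) =
      Module.finrank (ResidueField Q) (ResidueField Q ⊗[Q] Y) := by
  have : IsLocalHom (algebraMap Q R) := IsLocalHom.of_surjective _ hs
  let σ : ResidueField Q →+* ResidueField R := ResidueField.map (algebraMap Q R)
  have hσ : Function.Bijective σ := by
    refine ⟨σ.injective, fun y => ?_⟩
    obtain ⟨r, rfl⟩ := residue_surjective y
    obtain ⟨q, rfl⟩ := hs r
    exact ⟨residue Q q, rfl⟩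
  let s : ResidueField Q ≃ₗ[Q] ResidueField R :=
    LinearEquiv.ofBijective
      { toFun := σ
        map_add' := map_add σ
        map_smul' := fun q x => by
          rw [Algebra.smul_def, Algebra.smul_def, map_mul]
          rfl } hσ
  have : CompatibleSMul Q R (ResidueField R) X := .of_algebraMap_surjective _ _ hs
  let t : ResidueField R ⊗[R] X ≃ₗ[Q] ResidueField R ⊗[Q] X :=
    TensorProduct.equivOfCompatibleSMul Q R Q (ResidueField R) X
  let j : ResidueField Q ⊗[Q] Y ≃ₗ[Q] ResidueField R ⊗[R] X :=
    (TensorProduct.congr s e.symm).trans t.symm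
  have := rank_eq_of_equiv_equiv (R := ResidueField Q) (R' := ResidueField R) σ j.toAddEquiv hσ
    (by
      intro r m
      induction m using TensorProduct.induction_on with
      | zero => simp
      | add x y hx hy => rw [smul_add, map_add, hx, hy, map_add, smul_add]
      | tmul a y =>
        show (s (r * a)) ⊗ₜ[R] (e.symm y) = σ r • ((s a) ⊗ₜ[R] (e.symm y))
        rw [TensorProduct.smul_tmul']
        congr 1
        exact map_mul σ r a)
  simp only [Module.finrank, this]

theorem finrank_cmp' {Q R : Type} [CommRing Q] [CommRing R] [Algebra Q R] [IsLocalRing Q]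
    [IsLocalRing R] (hs : Function.Surjective (algebraMap Q R))
    (X Y : Type) [AddCommGroup X] [Module R X]
    [AddCommGroup Y] [Module Q Y] (e : X ≃+ Y)
    (he : ∀ (q : Q) (x : X), e (algebraMap Q R q • x) = q • e x) :
    Module.finrank (ResidueField R) (ResidueField R ⊗[R] X) =
      Module.finrank (ResidueField Q) (ResidueField Q ⊗[Q] Y) := by
  letI : Module Q X := Module.compHom X (algebraMap Q R)
  have : IsScalarTower Q R X := IsScalarTower.of_algebraMap_smul fun r x => rfl
  exact finrank_cmp hs X Y { e with map_smul' := he }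
end finrank

theorem exists_ab {Q : Type} [CommRing Q] (I J : Ideal Q) (f : Q) (hf : f ∈ I * J) :
    ∃ (r : ℕ) (a b : Fin r → Q), (∀ j, a j ∈ I) ∧ (∀ j, b j ∈ J) ∧ ∑ j, a j * b j = f := by
  induction hf using Submodule.mul_induction_on' with
  | mem_mul_mem m hm n hn => exact ⟨1, fun _ => m, fun _ => n, fun _ => hm, fun _ => hn, by simp⟩
  | add x hx y hy h1 h2 =>
    obtain ⟨r, a, b, ha, hb, h⟩ := h1
    obtain ⟨r', a', b', ha', hb', h'⟩ := h2
    refine ⟨r + r', Fin.append a a', Fin.append b b', ?_, ?_, ?_⟩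
    · intro j
      refine Fin.addCases (fun i => ?_) (fun i => ?_) j
      · simpa using ha i
      · simpa using ha' i
    · intro j
      refine Fin.addCases (fun i => ?_) (fun i => ?_) j
      · simpa using hb i
      · simpa using hb' i
    · simp [Fin.sum_univ_add, h, h']

section quot
variable {Q : Type} [CommRing Q] (f : Q) (N : Type) [AddCommGroup N] [Module Q N]

theorem tens_surj (t : (Q ⧸ Ideal.span {f}) ⊗[Q] N) :
    ∃ y : N, t = (1 : Q ⧸ Ideal.span {f}) ⊗ₜ[Q] y := by
  induction t using TensorProduct.induction_on with
  | zero => exact ⟨0, by simp⟩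
  | add x y hx hy =>
    obtain ⟨a, rfl⟩ := hx
    obtain ⟨b, rfl⟩ := hy
    exact ⟨a + b, by rw [TensorProduct.tmul_add]⟩
  | tmul r y =>
    obtain ⟨q, rfl⟩ := Ideal.Quotient.mk_surjective r
    refine ⟨q • y, ?_⟩
    rw [← TensorProduct.smul_tmul]
    congr 1
    rw [Algebra.smul_def, mul_one]
    rfl

variable {N} in
theorem tens_zero (y : N) :
    (1 : Q ⧸ Ideal.span {f}) ⊗ₜ[Q] y = 0 ↔ ∃ v, y = f • v := by
  constructor
  · intro h
    have := congr_arg (TensorProduct.quotTensorEquivQuotSMul N (Ideal.span {f})) h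
    rw [map_zero] at this
    have h2 := TensorProduct.quotTensorEquivQuotSMul_mk_tmul (Ideal.span {f}) (1 : Q) y
    rw [map_one] at h2
    rw [h2, one_smul, Submodule.Quotient.mk_eq_zero, Submodule.ideal_span_singleton_smul,
      Submodule.mem_smul_pointwise_iff_exists] at this
    obtain ⟨v, -, hv⟩ := this
    exact ⟨v, hv.symm⟩
  · rintro ⟨v, rfl⟩
    rw [← TensorProduct.smul_tmul]
    have : f • (1 : Q ⧸ Ideal.span {f}) = 0 := by
      rw [Algebra.smul_def, mul_one]
      exact Ideal.Quotient.eq_zero_iff_mem.2 (Ideal.mem_span_singleton_self f)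
    rw [this, TensorProduct.zero_tmul]

end quot
end BettiEZ


open BettiEZ

/-- **Main theorem, exact zerodivisor case.** Let `f, g` be an exact pair of
zerodivisors in the maximal ideal `m` of a Noetherian local ring `Q` (so
`ann_Q(f) = (g)` and `ann_Q(g) = (f)`), and let `R = Q/(f)`. If `M` is a
finitely generated `R`-module with `f ∈ m·ann_Q(M)`, then
`β_i^R(M) = β_i^Q(M)` for all `i ≥ 0`, i.e. `P_M^R(t) = P_M^Q(t)`. -/
theorem betti_eq_of_exact_zerodivisor_of_ann
    (Q : Type) [CommRing Q] [IsNoetherianRing Q] [IsLocalRing Q]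
    (f g : Q) (hf0 : f ≠ 0) (hg0 : g ≠ 0)
    (hfm : f ∈ IsLocalRing.maximalIdeal Q) (hgm : g ∈ IsLocalRing.maximalIdeal Q)
    (hannf : ∀ x : Q, x * f = 0 ↔ x ∈ Ideal.span {g})
    (hanng : ∀ x : Q, x * g = 0 ↔ x ∈ Ideal.span {f})
    [IsLocalRing (Q ⧸ Ideal.span {f})]
    (M : Type) [AddCommGroup M] [Module Q M] [Module (Q ⧸ Ideal.span {f}) M]
    [IsScalarTower Q (Q ⧸ Ideal.span {f}) M]
    [Module.Finite (Q ⧸ Ideal.span {f}) M]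
    (hann : f ∈ IsLocalRing.maximalIdeal Q * Module.annihilator Q M)
    (i : ℕ) :
    bettiNumber (Q ⧸ Ideal.span {f}) M i = bettiNumber Q M i := by
  obtain ⟨r, a, b, ha, hb, hab⟩ := exists_ab _ _ f hann
  obtain ⟨F, _, _, D, D', ι, hF, hD, hD1, hD2, h0, h0', hDD⟩ :=
    exists_F Q f g hgm hannf hanng a b ha hab _ hb
  have hs : Function.Surjective (algebraMap Q (Q ⧸ Ideal.span {f})) := Ideal.Quotient.mk_surjective
  have : IsLocalHom (algebraMap Q (Q ⧸ Ideal.span {f})) := IsLocalHom.of_surjective _ hs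
  let p : F 0 →ₗ[Q] IsLocalRing.ResidueField Q :=
    (Algebra.linearMap Q (IsLocalRing.ResidueField Q)).comp ι.toLinearMap
  let p' : (Q ⧸ Ideal.span {f}) ⊗[Q] F 0 →ₗ[Q ⧸ Ideal.span {f}]
      IsLocalRing.ResidueField (Q ⧸ Ideal.span {f}) :=
    ((Algebra.linearMap (Q ⧸ Ideal.span {f}) (IsLocalRing.ResidueField (Q ⧸ Ideal.span {f}))).comp
      (TensorProduct.AlgebraTensorModule.rid Q (Q ⧸ Ideal.span {f})
        (Q ⧸ Ideal.span {f})).toLinearMap).comp (ι.toLinearMap.baseChange (Q ⧸ Ideal.span {f}))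
  have hpv : ∀ y, p y = IsLocalRing.residue Q (ι y) := fun y => rfl
  have hpv' : ∀ y, p' (1 ⊗ₜ y) = IsLocalRing.residue (Q ⧸ Ideal.span {f})
      (algebraMap Q (Q ⧸ Ideal.span {f}) (ι y)) := fun y => by
    show IsLocalRing.residue (Q ⧸ Ideal.span {f}) (ι y • (1 : Q ⧸ Ideal.span {f})) = _
    rw [Algebra.smul_def, mul_one]
  have hp : Function.Surjective p := fun z => by
    obtain ⟨q, rfl⟩ := IsLocalRing.residue_surjective z
    exact ⟨ι.symm q, by rw [hpv, ι.apply_symm_apply]⟩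
  have hp' : Function.Surjective p' := fun z => by
    obtain ⟨q, rfl⟩ := IsLocalRing.residue_surjective z
    obtain ⟨q, rfl⟩ := hs q
    exact ⟨1 ⊗ₜ ι.symm q, by rw [hpv', ι.apply_symm_apply]⟩
  have hp0 : Function.Exact (D 0) p := fun y => by
    rw [hpv, IsLocalRing.residue_eq_zero_iff, h0]
    exact ⟨fun ⟨z, hz⟩ => ⟨z, ι.injective hz⟩, fun ⟨z, hz⟩ => ⟨z, by rw [hz]⟩⟩
  have hp0' : Function.Exact ((D' 0).baseChange (Q ⧸ Ideal.span {f})) p' := fun t => by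
    obtain ⟨y, rfl⟩ := tens_surj f _ t
    have hm : algebraMap Q (Q ⧸ Ideal.span {f}) (ι y) ∈
        IsLocalRing.maximalIdeal (Q ⧸ Ideal.span {f}) ↔ ι y ∈ IsLocalRing.maximalIdeal Q := by
      rw [IsLocalRing.mem_maximalIdeal, IsLocalRing.mem_maximalIdeal, mem_nonunits_iff,
        mem_nonunits_iff, isUnit_map_iff]
    rw [hpv', IsLocalRing.residue_eq_zero_iff, hm]
    constructor
    · intro h
      obtain ⟨z, hz⟩ := (h0' _).1 h
      exact ⟨1 ⊗ₜ z, by rw [LinearMap.baseChange_tmul, ι.injective hz]⟩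
    · rintro ⟨t, ht⟩
      obtain ⟨z, rfl⟩ := tens_surj f _ t
      rw [LinearMap.baseChange_tmul, ← sub_eq_zero, ← TensorProduct.tmul_sub, tens_zero] at ht
      obtain ⟨v, hv⟩ := ht
      have : ι y = ι (D' 0 z) - f * ι v := by
        rw [← smul_eq_mul, ← map_smul, ← hv, map_sub, sub_sub_cancel]
      rw [this]
      exact Ideal.sub_mem _ ((h0' _).2 ⟨z, rfl⟩) (Ideal.mul_mem_right _ _ hfm)
  have hD' : ∀ n, Function.Exact ((D' (n + 1)).baseChange (Q ⧸ Ideal.span {f}))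
      ((D' n).baseChange (Q ⧸ Ideal.span {f})) := fun n t => by
    obtain ⟨y, rfl⟩ := tens_surj f _ t
    rw [LinearMap.baseChange_tmul, tens_zero]
    constructor
    · rintro ⟨x, hx⟩
      obtain ⟨z, v, rfl⟩ := hD2 n y x hx
      refine ⟨1 ⊗ₜ z, ?_⟩
      rw [LinearMap.baseChange_tmul, TensorProduct.tmul_add, (tens_zero f (f • v)).2 ⟨v, rfl⟩,
        add_zero]
    · rintro ⟨t, ht⟩
      obtain ⟨z, rfl⟩ := tens_surj f _ t
      rw [LinearMap.baseChange_tmul, ← sub_eq_zero, ← TensorProduct.tmul_sub, tens_zero] at ht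
      obtain ⟨v, hv⟩ := ht
      obtain ⟨w, hw⟩ := hD1 n z
      refine ⟨w - D' n v, ?_⟩
      have : y = D' (n + 1) z - f • v := by rw [← hv, sub_sub_cancel]
      rw [this, map_sub, hw, map_smul, smul_sub]
  obtain ⟨E⟩ := cmpTor F D D' M _ _ hD hD' hDD hF p hp hp0 p' hp' hp0' i
  unfold bettiNumber
  let L := E.toLinearEquiv
  exact finrank_cmp' hs _ _ L.toAddEquiv (fun q x => L.map_smul q x)
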